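/- Let ρ₀ satisfy the stated first-order equation with limits a and b at ∓∞, and fix α with 0 < α < min{√2(b² − a²)a, √2(b² − a²)b}. Let h : ℝ → ℝ be continuous and suppose there are real numbers h⁺, h⁻ and C > 0 with |h(z) − h⁺| ≤ C e^{−αz} for z ≥ 0 and |h(z) − h⁻| ≤ C e^{αz} for z ≤ 0, and suppose ∫_ℝ h(z) ρ₀'(z) dz = 0. Then v₁*(z) := ρ₀'(z) · ∫₀^z ρ₀'(ς)^{−2} ( ∫_ς^{+∞} h(τ) ρ₀'(τ) dτ ) dς is bounded on ℝ, with lim_{z→+∞} v₁*(z) = h⁺ / (2(a² − b²)² b²) and lim_{z→−∞} v₁*(z) = h⁻ / (2(a² − b²)² a²). -/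

import Mathlib

open Filter MeasureTheory

/-- `v₁*(z) = ρ₀'(z) ∫₀^z ρ₀'(ς)⁻² (∫_ς^∞ h(τ)ρ₀'(τ) dτ) dς`. -/
noncomputable def v1star (ρ₀ h : ℝ → ℝ) (z : ℝ) : ℝ :=
  deriv ρ₀ z *
    ∫ ς in (0:ℝ)..z, ((deriv ρ₀ ς) ^ 2)⁻¹ * ∫ τ in Set.Ioi ς, h τ * deriv ρ₀ τ

theorem aux_le {f g f' g' : ℝ → ℝ} (hf : ∀ x, HasDerivAt f (f' x) x)
    (hg : ∀ x, HasDerivAt g (g' x) x) (hgt : Tendsto g atTop atTop) {c c' : ℝ} (hc : c < c')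
    (hle : ∀ᶠ x in atTop, f' x ≤ c * g' x) : ∀ᶠ x in atTop, f x ≤ c' * g x := by
  obtain ⟨z, hz⟩ := eventually_atTop.1 hle
  have hd : ∀ x, HasDerivAt (fun x => f x - c * g x) (f' x - c * g' x) x :=
    fun x => (hf x).sub ((hg x).const_mul c)
  have hanti : AntitoneOn (fun x => f x - c * g x) (Set.Ici z) := by
    apply antitoneOn_of_deriv_nonpos (convex_Ici z)
    · exact fun x _ => (hd x).continuousAt.continuousWithinAt
    · exact fun x _ => (hd x).differentiableAt.differentiableWithinAt
    · intro x hx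
      rw [interior_Ici] at hx
      rw [(hd x).deriv]
      have := hz x (le_of_lt hx)
      linarith
  have h2 := (hgt.const_mul_atTop (sub_pos.2 hc)).eventually_ge_atTop (f z - c * g z)
  filter_upwards [h2, eventually_ge_atTop z] with x h3 h4
  have h5 := hanti (Set.mem_Ici.2 le_rfl) (Set.mem_Ici.2 h4) h4
  simp only at h5
  nlinarith

theorem aux_lhop {f g f' g' : ℝ → ℝ} (hf : ∀ x, HasDerivAt f (f' x) x)
    (hg : ∀ x, HasDerivAt g (g' x) x) (hgt : Tendsto g atTop atTop)
    (hg' : ∀ᶠ x in atTop, 0 < g' x) {L : ℝ}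
    (hL : Tendsto (fun x => f' x / g' x) atTop (nhds L)) :
    Tendsto (fun x => f x / g x) atTop (nhds L) := by
  rw [tendsto_order]
  constructor
  · intro l hl
    obtain ⟨c, hc1, hc2⟩ := exists_between hl
    obtain ⟨d, hd1, hd2⟩ := exists_between hc2
    have := aux_le (fun x => (hf x).neg) hg hgt (neg_lt_neg hd1) (by
      filter_upwards [hg', hL.eventually_const_lt hd2] with x h1 h2
      rw [lt_div_iff₀ h1] at h2
      linarith)
    filter_upwards [this, hgt.eventually_gt_atTop 0] with x h1 h2
    rw [lt_div_iff₀ h2]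
    simp only [Pi.neg_apply] at h1
    nlinarith
  · intro l hl
    obtain ⟨c, hc1, hc2⟩ := exists_between hl
    obtain ⟨d, hd1, hd2⟩ := exists_between hc2
    have := aux_le hf hg hgt hd1 (by
      filter_upwards [hg', hL.eventually_lt_const hc1] with x h1 h2
      rw [div_lt_iff₀ h1] at h2
      linarith)
    filter_upwards [this, hgt.eventually_gt_atTop 0] with x h1 h2
    rw [div_lt_iff₀ h2]
    nlinarith

theorem aux_core {w q G h I : ℝ → ℝ} {k H : ℝ} (hk : 0 < k) (hw0 : ∀ x, 0 < w x)
    (hw : ∀ x, HasDerivAt w (q x * w x) x) (hq : Tendsto q atTop (nhds (-k)))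
    (hwt : Tendsto w atTop (nhds 0)) (hG : ∀ x, HasDerivAt G (-(h x * w x)) x)
    (hGt : Tendsto G atTop (nhds 0)) (hh : Tendsto h atTop (nhds H))
    (hI : ∀ x, HasDerivAt I (((w x) ^ 2)⁻¹ * G x) x) :
    Tendsto (fun x => w x * I x) atTop (nhds (H / k ^ 2)) := by
  have hqneg : ∀ᶠ x in atTop, q x < 0 := hq.eventually_lt_const (by linarith)
  have h1 : Tendsto (fun x => G x / w x) atTop (nhds (H / k)) := by
    apply HasDerivAt.lhopital_zero_atTop (.of_forall hG) (.of_forall hw) _ hGt hwt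
    · have : Tendsto (fun x => - h x / q x) atTop (nhds (- H / - k)) :=
        hh.neg.div hq (by linarith)
      rw [neg_div_neg_eq] at this
      refine this.congr fun x => ?_
      rw [← neg_mul, mul_div_mul_right _ _ (hw0 x).ne']
    · filter_upwards [hqneg] with x hx
      exact mul_ne_zero hx.ne (hw0 x).ne'
  have h2 : Tendsto (fun x => I x / (w x)⁻¹) atTop (nhds (H / k ^ 2)) := by
    apply aux_lhop hI (fun x => (hw x).inv (hw0 x).ne')
    · apply Tendsto.inv_tendsto_nhdsGT_zero
      rw [tendsto_nhdsWithin_iff]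
      exact ⟨hwt, .of_forall hw0⟩
    · filter_upwards [hqneg] with x hx
      have := hw0 x
      apply div_pos _ (by positivity)
      nlinarith
    · have : Tendsto (fun x => (G x / w x) / (- q x)) atTop (nhds ((H / k) / (- -k))) :=
        h1.div hq.neg (by linarith)
      rw [neg_neg, div_div, ← pow_two] at this
      refine this.congr' ?_
      filter_upwards [hqneg] with x hx
      have := (hw0 x).ne'
      have := hx.ne
      field_simp
  refine h2.congr fun x => ?_
  rw [div_inv_eq_mul, mul_comm]

theorem aux_core_bot {w q G h I : ℝ → ℝ} {k H : ℝ} (hk : 0 < k) (hw0 : ∀ x, 0 < w x)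
    (hw : ∀ x, HasDerivAt w (q x * w x) x) (hq : Tendsto q atBot (nhds k))
    (hwt : Tendsto w atBot (nhds 0)) (hG : ∀ x, HasDerivAt G (-(h x * w x)) x)
    (hGt : Tendsto G atBot (nhds 0)) (hh : Tendsto h atBot (nhds H))
    (hI : ∀ x, HasDerivAt I (((w x) ^ 2)⁻¹ * G x) x) :
    Tendsto (fun x => w x * I x) atBot (nhds (H / k ^ 2)) := by
  have hn := tendsto_neg_atTop_atBot (G := ℝ)
  have key := aux_core (w := fun x => w (-x)) (q := fun x => - q (-x)) (G := fun x => - G (-x))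
    (h := fun x => h (-x)) (I := fun x => I (-x)) (H := H) hk (fun x => hw0 _)
    (fun x => by
      have := (hw (-x)).comp x (hasDerivAt_neg x)
      exact this.congr_deriv (by ring))
    (hq.comp hn).neg (hwt.comp hn)
    (fun x => by
      have := ((hG (-x)).comp x (hasDerivAt_neg x)).neg
      exact this.congr_deriv (by ring))
    (by simpa using (hGt.comp hn).neg) (hh.comp hn)
    (fun x => by
      have := (hI (-x)).comp x (hasDerivAt_neg x)
      exact this.congr_deriv (by ring))
  have := key.comp (tendsto_neg_atBot_atTop (G := ℝ))
  simpa [Function.comp_def] using this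

theorem aux_bdd {v : ℝ → ℝ} (hv : Continuous v) {l m : ℝ} (h1 : Tendsto v atTop (nhds l))
    (h2 : Tendsto v atBot (nhds m)) : ∃ M, ∀ z, |v z| ≤ M := by
  obtain ⟨x, hx⟩ := eventually_atTop.1 (h1.abs.eventually_le_const (lt_add_one |l|))
  obtain ⟨y, hy⟩ := eventually_atBot.1 (h2.abs.eventually_le_const (lt_add_one |m|))
  obtain ⟨K, hK⟩ := (isCompact_Icc (a := y) (b := x)).exists_bound_of_continuousOn hv.continuousOn
  refine ⟨max (|l| + 1) (max (|m| + 1) K), fun z => ?_⟩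
  rcases le_total x z with h | h
  · exact (hx z h).trans (le_max_left _ _)
  rcases le_total z y with h' | h'
  · exact (hy z h').trans ((le_max_left _ _).trans (le_max_right _ _))
  · exact (hK z ⟨h', h⟩).trans ((le_max_right _ _).trans (le_max_right _ _))

/-- If `h` is continuous with exponential convergence to limits `h⁺`, `h⁻`
at `±∞` (rate `α` with `0 < α < min{√2(b² − a²)a, √2(b² − a²)b}`) and `∫ h ρ₀' = 0`, then
`v₁*` is bounded, with `v₁*(+∞) = h⁺/(2(a² − b²)²b²)` and `v₁*(−∞) = h⁻/(2(a² − b²)²a²)`. -/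
theorem statement12 (a b α : ℝ) (ha : 0 < a) (hab : a < b)
    (hα : 0 < α)
    (hα' : α < min (Real.sqrt 2 * (b ^ 2 - a ^ 2) * a) (Real.sqrt 2 * (b ^ 2 - a ^ 2) * b))
    (ρ₀ : ℝ → ℝ) (hreg : ContDiff ℝ 1 ρ₀)
    (hderiv : ∀ z, deriv ρ₀ z =
      Real.sqrt 2 / 2 * ((ρ₀ z) ^ 2 - a ^ 2) * (b ^ 2 - (ρ₀ z) ^ 2))
    (hbnd : ∀ z, a < ρ₀ z ∧ ρ₀ z < b)
    (hbot : Tendsto ρ₀ atBot (nhds a))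
    (htop : Tendsto ρ₀ atTop (nhds b))
    (h : ℝ → ℝ) (hh : Continuous h)
    (hplus hminus C : ℝ) (hC : 0 < C)
    (hdecp : ∀ z : ℝ, 0 ≤ z → |h z - hplus| ≤ C * Real.exp (-α * z))
    (hdecm : ∀ z : ℝ, z ≤ 0 → |h z - hminus| ≤ C * Real.exp (α * z))
    (horth : (∫ z : ℝ, h z * deriv ρ₀ z) = 0) :
    (∃ M, ∀ z, |v1star ρ₀ h z| ≤ M) ∧
    Tendsto (v1star ρ₀ h) atTop (nhds (hplus / (2 * (a ^ 2 - b ^ 2) ^ 2 * b ^ 2))) ∧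
    Tendsto (v1star ρ₀ h) atBot (nhds (hminus / (2 * (a ^ 2 - b ^ 2) ^ 2 * a ^ 2))) := by
  have hs : 0 < Real.sqrt 2 := by positivity
  have hs2 : Real.sqrt 2 ^ 2 = 2 := Real.sq_sqrt (by norm_num)
  have hb2 : 0 < b ^ 2 - a ^ 2 := by nlinarith
  set w := deriv ρ₀ with hwdef
  have hρ : ∀ x, HasDerivAt ρ₀ (w x) x := fun x =>
    (hreg.differentiable (by norm_num) x).hasDerivAt
  have hwc : Continuous w := hreg.continuous_deriv (by norm_num)
  have hw0 : ∀ x, 0 < w x := by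
    intro x
    obtain ⟨h1, h2⟩ := hbnd x
    rw [hderiv x]
    have : 0 < ρ₀ x ^ 2 - a ^ 2 := by nlinarith
    have : 0 < b ^ 2 - ρ₀ x ^ 2 := by nlinarith
    positivity
  have hw : ∀ x, HasDerivAt w
      ((Real.sqrt 2 * ρ₀ x * (a ^ 2 + b ^ 2 - 2 * ρ₀ x ^ 2)) * w x) x := by
    intro x
    have h1 : HasDerivAt (fun z => Real.sqrt 2 / 2 * ((ρ₀ z) ^ 2 - a ^ 2) * (b ^ 2 - (ρ₀ z) ^ 2))
        _ x := ((((hρ x).pow 2).sub_const (a ^ 2)).const_mul (Real.sqrt 2 / 2)).mul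
          (((hρ x).pow 2).const_sub (b ^ 2))
    rw [show w = fun z => Real.sqrt 2 / 2 * ((ρ₀ z) ^ 2 - a ^ 2) * (b ^ 2 - (ρ₀ z) ^ 2) from
      funext hderiv] at h1 ⊢
    convert h1 using 1
    simp
    ring
  have hwt : Tendsto w atTop (nhds 0) := by
    rw [show w = _ from funext hderiv]
    have := (((htop.pow 2).sub_const (a ^ 2)).const_mul (Real.sqrt 2 / 2)).mul
          ((htop.pow 2).const_sub (b ^ 2))
    simpa using this
  have hwb : Tendsto w atBot (nhds 0) := by
    rw [show w = _ from funext hderiv]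
    have := (((hbot.pow 2).sub_const (a ^ 2)).const_mul (Real.sqrt 2 / 2)).mul
          ((hbot.pow 2).const_sub (b ^ 2))
    simpa using this
  have hqt : Tendsto (fun x => Real.sqrt 2 * ρ₀ x * (a ^ 2 + b ^ 2 - 2 * ρ₀ x ^ 2)) atTop
      (nhds (-(Real.sqrt 2 * b * (b ^ 2 - a ^ 2)))) := by
    have := (htop.const_mul (Real.sqrt 2)).mul
      (((htop.pow 2).const_mul 2).const_sub (a ^ 2 + b ^ 2))
    convert this using 2
    ring
  have hqb : Tendsto (fun x => Real.sqrt 2 * ρ₀ x * (a ^ 2 + b ^ 2 - 2 * ρ₀ x ^ 2)) atBot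
      (nhds (Real.sqrt 2 * a * (b ^ 2 - a ^ 2))) := by
    have := (hbot.const_mul (Real.sqrt 2)).mul
      (((hbot.pow 2).const_mul 2).const_sub (a ^ 2 + b ^ 2))
    convert this using 2
    ring
  have hht : Tendsto h atTop (nhds hplus) := by
    rw [tendsto_iff_norm_sub_tendsto_zero]
    refine squeeze_zero' (.of_forall fun _ => norm_nonneg _)
      ((eventually_ge_atTop 0).mono hdecp) ?_
    have : Tendsto (fun z : ℝ => -α * z) atTop atBot :=
      tendsto_id.const_mul_atTop_of_neg (by linarith)
    simpa using (Real.tendsto_exp_atBot.comp this).const_mul C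
  have hhb : Tendsto h atBot (nhds hminus) := by
    rw [tendsto_iff_norm_sub_tendsto_zero]
    refine squeeze_zero' (.of_forall fun _ => norm_nonneg _)
      ((eventually_le_atBot 0).mono hdecm) ?_
    have : Tendsto (fun z : ℝ => α * z) atBot atBot :=
      tendsto_id.const_mul_atBot hα
    simpa using (Real.tendsto_exp_atBot.comp this).const_mul C
  have hwi : Integrable w := by
    refine integrable_of_intervalIntegral_norm_bounded (l := atTop) (a := fun x : ℝ => -x)
      (b := fun x => x) (b - a) (fun i => ?_) tendsto_neg_atTop_atBot tendsto_id ?_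
    · exact (hwc.integrableOn_Icc).mono_set Set.Ioc_subset_Icc_self
    · refine .of_forall fun x => ?_
      have : ∀ x, ‖w x‖ = w x := fun x => abs_of_pos (hw0 x)
      simp only [this]
      rw [intervalIntegral.integral_eq_sub_of_hasDerivAt (fun y _ => hρ y)
        (hwc.intervalIntegrable _ _)]
      linarith [(hbnd x).2, (hbnd (-x)).1]
  have hcc : Continuous fun x => h x * w x := hh.mul hwc
  have hi : Integrable fun x => h x * w x := by
    obtain ⟨M, hM⟩ := aux_bdd hh hht hhb
    exact hwi.bdd_mul hh.aestronglyMeasurable (.of_forall hM)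
  set G : ℝ → ℝ := fun ς => ∫ τ in Set.Ioi ς, h τ * w τ with hGdef
  have hG0 : ∀ x, G x = G 0 - ∫ τ in (0:ℝ)..x, h τ * w τ := by
    intro x
    have := intervalIntegral.integral_interval_add_Ioi (a := 0) (b := x) (hi.integrableOn (s := Set.Ioi 0))
      (hi.integrableOn (s := Set.Ioi x))
    simp only [hGdef]
    linarith
  have hG : ∀ x, HasDerivAt G (-(h x * w x)) x := by
    intro x
    rw [show G = _ from funext hG0]
    exact (intervalIntegral.integral_hasDerivAt_right (hcc.intervalIntegrable _ _)
      (hcc.stronglyMeasurableAtFilter _ _) hcc.continuousAt).const_sub _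
  have hGt : Tendsto G atTop (nhds 0) := by
    rw [show G = _ from funext hG0]
    have := (intervalIntegral_tendsto_integral_Ioi 0 (hi.integrableOn (s := Set.Ioi 0))
      tendsto_id).const_sub (G 0)
    simpa [hGdef] using this
  have hGb : Tendsto G atBot (nhds 0) := by
    have h1 := (intervalIntegral_tendsto_integral_Iic 0 (hi.integrableOn (s := Set.Iic 0))
      tendsto_id).const_add (G 0)
    have h2 := intervalIntegral.integral_Iic_add_Ioi (hi.integrableOn (s := Set.Iic 0))
      (hi.integrableOn (s := Set.Ioi 0))
    rw [horth, add_comm] at h2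
    rw [h2] at h1
    refine h1.congr fun x => ?_
    rw [hG0 x, id_eq, intervalIntegral.integral_symm 0 x]
    ring
  have hGc : Continuous G := continuous_iff_continuousAt.2 fun x => (hG x).continuousAt
  have hIc : Continuous fun x => ((w x) ^ 2)⁻¹ * G x :=
    ((hwc.pow 2).inv₀ fun x => (pow_pos (hw0 x) 2).ne').mul hGc
  have hI : ∀ x, HasDerivAt (fun z => ∫ ς in (0:ℝ)..z, ((w ς) ^ 2)⁻¹ * G ς)
      (((w x) ^ 2)⁻¹ * G x) x := fun x =>
    intervalIntegral.integral_hasDerivAt_right (hIc.intervalIntegrable _ _)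
      (hIc.stronglyMeasurableAtFilter _ _) hIc.continuousAt
  have hv : v1star ρ₀ h = fun z => w z * ∫ ς in (0:ℝ)..z, ((w ς) ^ 2)⁻¹ * G ς := rfl
  have hT := aux_core (by have := ha.trans hab; positivity) hw0 hw hqt hwt hG hGt hht hI
  have hB := aux_core_bot (by positivity) hw0 hw hqb hwb hG hGb hhb hI
  rw [← hv, show (Real.sqrt 2 * b * (b ^ 2 - a ^ 2)) ^ 2 = 2 * (a ^ 2 - b ^ 2) ^ 2 * b ^ 2 by
    rw [mul_pow, mul_pow, hs2]; ring] at hT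
  rw [← hv, show (Real.sqrt 2 * a * (b ^ 2 - a ^ 2)) ^ 2 = 2 * (a ^ 2 - b ^ 2) ^ 2 * a ^ 2 by
    rw [mul_pow, mul_pow, hs2]; ring] at hB
  refine ⟨aux_bdd ?_ hT hB, hT, hB⟩
  rw [hv]
  exact hwc.mul (continuous_iff_continuousAt.2 fun x => (hI x).continuousAt)
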